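/- arXiv:0805.3740 — 6 statements merged into one kernel-verified Lean document; each statement's English description precedes it below -/
import Mathlib

section
/- Let E be a real inner product space and let a, b, c, d ∈ E be unit vectors. Then the following operator-norm estimate holds: ‖π_d ∘ (π_c − π_b) ∘ π_a‖ ≤ 2(‖a − c‖·‖c − d‖ + ‖a − b‖·‖b − d‖). -/
/-- Orthogonal projection onto the orthogonal complement of `u`:
`π_u z = z - ⟪z, u⟫ • u`. -/
noncomputable def orthProj {E : Type*} [NormedAddCommGroup E] [InnerProductSpace ℝ E]
    (u : E) : E →L[ℝ] E :=
  ContinuousLinearMap.id ℝ E - (innerSL ℝ u).smulRight u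

/-!
The difference `π_c - π_b` is `b ⊗ b - c ⊗ c`, where `v ⊗ v` is the rank-one map
`z ↦ ⟪v, z⟫ • v`. Since `π_a` is symmetric, `π_d ∘ (v ⊗ v) ∘ π_a = π_d v ⊗ π_a v`, whose norm is
`‖π_d v‖ * ‖π_a v‖`. As `π_u` is a contraction killing `u`, `‖π_u v‖ = ‖π_u (v - u)‖ ≤ ‖v - u‖`.
-/

open InnerProductSpace

section RCLike

variable {𝕜 E F : Type*} [RCLike 𝕜] [NormedAddCommGroup E] [InnerProductSpace 𝕜 E]
  [NormedAddCommGroup F] [InnerProductSpace 𝕜 F]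

theorem rankOne_comp_of_isSymmetric {T : F →L[𝕜] F} (hT : (T : F →ₗ[𝕜] F).IsSymmetric)
    (x : E) (y : F) : rankOne 𝕜 x y ∘L T = rankOne 𝕜 x (T y) := by
  ext z
  exact congrArg (· • x) (hT y z).symm

theorem norm_starProjection_orthogonal_apply_le (K : Submodule 𝕜 E) [K.HasOrthogonalProjection]
    {u : E} (hu : u ∈ K) (v : E) : ‖Kᗮ.starProjection v‖ ≤ ‖v - u‖ := by
  have starProjection_eq_zero : Kᗮ.starProjection u = 0 :=
    Submodule.starProjection_orthogonal_apply_eq_zero hu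
  calc ‖Kᗮ.starProjection v‖ = ‖Kᗮ.starProjection (v - u)‖ := by
        rw [map_sub, starProjection_eq_zero, sub_zero]
    _ ≤ ‖v - u‖ := Kᗮ.norm_starProjection_apply_le (v - u)

theorem norm_starProjection_comp_rankOne_comp_starProjection (K : Submodule 𝕜 E)
    [K.HasOrthogonalProjection] (L : Submodule 𝕜 F) [L.HasOrthogonalProjection] (x : E) (y : F) :
    ‖K.starProjection ∘L rankOne 𝕜 x y ∘L L.starProjection‖ =
      ‖K.starProjection x‖ * ‖L.starProjection y‖ := by
  rw [rankOne_comp_of_isSymmetric L.starProjection_isSymmetric,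
    comp_rankOne, norm_rankOne]

end RCLike

section OrthProj

variable {E : Type*} [NormedAddCommGroup E] [InnerProductSpace ℝ E]

theorem orthProj_eq_starProjection {u : E} (hu : ‖u‖ = 1) :
    orthProj u = (ℝ ∙ u)ᗮ.starProjection := by
  ext z
  rw [Submodule.starProjection_orthogonal_val, Submodule.starProjection_unit_singleton ℝ hu]
  rfl

theorem orthProj_sub_orthProj (u v : E) :
    orthProj u - orthProj v = rankOne ℝ v v - rankOne ℝ u u :=
  sub_sub_sub_cancel_left _ _ _

theorem norm_orthProj_comp_rankOne_comp_orthProj_le {a d : E} (ha : ‖a‖ = 1) (hd : ‖d‖ = 1)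
    (x y : E) : ‖orthProj d ∘L rankOne ℝ x y ∘L orthProj a‖ ≤ ‖a - y‖ * ‖x - d‖ := by
  rw [orthProj_eq_starProjection ha, orthProj_eq_starProjection hd,
    norm_starProjection_comp_rankOne_comp_starProjection, mul_comm, norm_sub_rev a]
  gcongr <;> exact norm_starProjection_orthogonal_apply_le _ (Submodule.mem_span_singleton_self _) _

end OrthProj

theorem stmt1_general {E : Type*} [NormedAddCommGroup E] [InnerProductSpace ℝ E]
    {a d : E} (ha : ‖a‖ = 1) (hd : ‖d‖ = 1) (b c : E) :
    ‖orthProj d ∘L (orthProj c - orthProj b) ∘L orthProj a‖ ≤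
      ‖a - c‖ * ‖c - d‖ + ‖a - b‖ * ‖b - d‖ := by
  rw [orthProj_sub_orthProj, ContinuousLinearMap.sub_comp, ContinuousLinearMap.comp_sub,
    add_comm]
  exact norm_sub_le_of_le (norm_orthProj_comp_rankOne_comp_orthProj_le ha hd b b)
    (norm_orthProj_comp_rankOne_comp_orthProj_le ha hd c c)

theorem stmt1 {E : Type*} [NormedAddCommGroup E] [InnerProductSpace ℝ E]
    (a b c d : E) (ha : ‖a‖ = 1) (hb : ‖b‖ = 1) (hc : ‖c‖ = 1) (hd : ‖d‖ = 1) :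
    ‖(orthProj d).comp ((orthProj c - orthProj b).comp (orthProj a))‖ ≤
      2 * (‖a - c‖ * ‖c - d‖ + ‖a - b‖ * ‖b - d‖) :=
  (stmt1_general ha hd b c).trans (le_mul_of_one_le_left (by positivity) one_le_two)
end

section
/- Let T > 0 and let μ and ν be finite signed Borel measures on the interval [0,T]. Define u, v : [0,T] → ℝ by u(t) = μ([0,t]) and v(t) = ν([0,t]), and define v(t−) = ν([0,t)). Then for all 0 ≤ a ≤ b ≤ T the integration by parts formula holds: ∫_{(a,b]} u(t) dν(t) + ∫_{(a,b]} v(t−) dμ(t) = u(b) v(b) − u(a) v(a). -/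
open MeasureTheory Set

/-! Under the product measure `μ ⊗ ν`, the half-plane `{(s, t) | s ≤ t}` has mass
`∫ μ(-∞, t] dν(t)` and its complement `{(s, t) | t < s}` has mass `∫ ν(-∞, s) dμ(s)`. Since the
diagonal is counted only once, one of the two distribution functions appears through its left limit.
Restricting both measures to `[c, b]` and subtracting the same identity on `[c, a]` localizes this
to `(a, b]`, and signed measures follow by bilinearity. -/

section LinearOrder

variable {α : Type*} [LinearOrder α] [TopologicalSpace α] [OrderClosedTopology α]
  [MeasurableSpace α] [OpensMeasurableSpace α]

theorem setLIntegral_Icc_add_setLIntegral_Ioc (μ : Measure α) (f : α → ENNReal) {a b c : α}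
    (hca : c ≤ a) (hab : a ≤ b) :
    (∫⁻ t in Icc c a, f t ∂μ) + ∫⁻ t in Ioc a b, f t ∂μ = ∫⁻ t in Icc c b, f t ∂μ := by
  have hdisj : Disjoint (Icc c a) (Ioc a b) :=
    disjoint_left.2 fun _ hle hlt => hlt.1.not_ge hle.2
  rw [← lintegral_union measurableSet_Ioc hdisj, Icc_union_Ioc_eq_Icc hca hab]

variable [SecondCountableTopology α] (μ ν : Measure α) [SFinite μ] [SFinite ν]

theorem lintegral_measure_Iic_add_lintegral_measure_Iio :
    (∫⁻ t, μ (Iic t) ∂ν) + ∫⁻ t, ν (Iio t) ∂μ = μ univ * ν univ := by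
  have hle : MeasurableSet {p : α × α | p.1 ≤ p.2} := measurableSet_le'
  have below : μ.prod ν {p | p.1 ≤ p.2} = ∫⁻ t, μ (Iic t) ∂ν := Measure.prod_apply_symm hle
  have above : μ.prod ν {p | p.1 ≤ p.2}ᶜ = ∫⁻ t, ν (Iio t) ∂μ := by
    rw [Measure.prod_apply hle.compl]
    simp only [compl_ofPred, not_le, preimage_ofPred_eq, Iio_def]
  rw [← below, ← above, measure_add_measure_compl hle, ← univ_prod_univ, Measure.prod_prod]

theorem setLIntegral_Icc_measure_Icc_add_setLIntegral_Icc_measure_Ico (c b : α) :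
    (∫⁻ t in Icc c b, μ (Icc c t) ∂ν) + ∫⁻ t in Icc c b, ν (Ico c t) ∂μ
      = μ (Icc c b) * ν (Icc c b) := by
  have hIcc : ∀ t ∈ Icc c b, μ.restrict (Icc c b) (Iic t) = μ (Icc c t) := fun t ht => by
    have inter_eq : Iic t ∩ Icc c b = Icc c t := by grind
    rw [Measure.restrict_apply measurableSet_Iic, inter_eq]
  have hIco : ∀ t ∈ Icc c b, ν.restrict (Icc c b) (Iio t) = ν (Ico c t) := fun t ht => by
    have inter_eq : Iio t ∩ Icc c b = Ico c t := by grind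
    rw [Measure.restrict_apply measurableSet_Iio, inter_eq]
  rw [← setLIntegral_congr_fun measurableSet_Icc hIcc,
    ← setLIntegral_congr_fun measurableSet_Icc hIco,
    lintegral_measure_Iic_add_lintegral_measure_Iio, Measure.restrict_apply_univ,
    Measure.restrict_apply_univ]

theorem setLIntegral_Ioc_measure_Icc_add_setLIntegral_Ioc_measure_Ico {a b c : α}
    (hca : c ≤ a) (hab : a ≤ b) :
    (∫⁻ t in Ioc a b, μ (Icc c t) ∂ν) + (∫⁻ t in Ioc a b, ν (Ico c t) ∂μ)
      + μ (Icc c a) * ν (Icc c a) = μ (Icc c b) * ν (Icc c b) := by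
  rw [← setLIntegral_Icc_measure_Icc_add_setLIntegral_Icc_measure_Ico μ ν c a,
    ← setLIntegral_Icc_measure_Icc_add_setLIntegral_Icc_measure_Ico μ ν c b,
    ← setLIntegral_Icc_add_setLIntegral_Ioc ν _ hca hab,
    ← setLIntegral_Icc_add_setLIntegral_Ioc μ _ hca hab]
  ring

end LinearOrder

section LocallyFinite

variable {α : Type*} [ConditionallyCompleteLinearOrder α] [TopologicalSpace α] [OrderTopology α]
  [MeasurableSpace α] [BorelSpace α]

section PositiveMeasures

variable (μ ν : Measure α) [IsLocallyFiniteMeasure μ] [IsLocallyFiniteMeasure ν]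

theorem integrableOn_measureReal_Icc (a b c : α) :
    IntegrableOn (fun t => μ.real (Icc c t)) (Ioc a b) ν :=
  have hmono : Monotone fun t => μ.real (Icc c t) := fun _ _ h =>
    measureReal_mono (Icc_subset_Icc_right h) measure_Icc_lt_top.ne
  ((hmono.monotoneOn _).integrableOn_isCompact isCompact_Icc).mono_set Ioc_subset_Icc_self

theorem integrableOn_measureReal_Ico (a b c : α) :
    IntegrableOn (fun t => μ.real (Ico c t)) (Ioc a b) ν :=
  have hmono : Monotone fun t => μ.real (Ico c t) := fun _ _ h =>
    measureReal_mono (Ico_subset_Ico_right h) measure_Ico_lt_top.ne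
  ((hmono.monotoneOn _).integrableOn_isCompact isCompact_Icc).mono_set Ioc_subset_Icc_self

theorem setIntegral_measureReal_Icc_add_setIntegral_measureReal_Ico
    [SecondCountableTopology α] {a b c : α} (hca : c ≤ a) (hab : a ≤ b) :
    (∫ t in Ioc a b, μ.real (Icc c t) ∂ν) + ∫ t in Ioc a b, ν.real (Ico c t) ∂μ
      = μ.real (Icc c b) * ν.real (Icc c b) - μ.real (Icc c a) * ν.real (Icc c a) := by
  have hμ : Monotone fun t => μ (Icc c t) := fun _ _ h => measure_mono (Icc_subset_Icc_right h)
  have hν : Monotone fun t => ν (Ico c t) := fun _ _ h => measure_mono (Ico_subset_Ico_right h)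
  have parts := setLIntegral_Ioc_measure_Icc_add_setLIntegral_Ioc_measure_Ico μ ν hca hab
  have hfin : μ (Icc c b) * ν (Icc c b) ≠ ⊤ :=
    ENNReal.mul_ne_top measure_Icc_lt_top.ne measure_Icc_lt_top.ne
  obtain ⟨hsum, hcorner⟩ := ENNReal.add_ne_top.1 (parts.trans_ne hfin)
  obtain ⟨hleft, hright⟩ := ENNReal.add_ne_top.1 hsum
  simp only [measureReal_def]
  rw [integral_toReal hμ.measurable.aemeasurable (ae_of_all _ fun _ => measure_Icc_lt_top),
    integral_toReal hν.measurable.aemeasurable (ae_of_all _ fun _ => measure_Ico_lt_top),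
    eq_sub_iff_add_eq, ← ENNReal.toReal_mul, ← ENNReal.toReal_mul, ← parts,
    ENNReal.toReal_add hsum hcorner, ENNReal.toReal_add hleft hright]

end PositiveMeasures

theorem stmt6_general [SecondCountableTopology α] (μ₁ μ₂ ν₁ ν₂ : Measure α)
    [IsLocallyFiniteMeasure μ₁] [IsLocallyFiniteMeasure μ₂]
    [IsLocallyFiniteMeasure ν₁] [IsLocallyFiniteMeasure ν₂]
    {u v vminus : α → ℝ} {a b c : α}
    (hu : ∀ t, u t = μ₁.real (Icc c t) - μ₂.real (Icc c t))
    (hv : ∀ t, v t = ν₁.real (Icc c t) - ν₂.real (Icc c t))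
    (hvminus : ∀ t, vminus t = ν₁.real (Ico c t) - ν₂.real (Ico c t))
    (hca : c ≤ a) (hab : a ≤ b) :
    ((∫ t in Ioc a b, u t ∂ν₁) - ∫ t in Ioc a b, u t ∂ν₂)
      + ((∫ t in Ioc a b, vminus t ∂μ₁) - ∫ t in Ioc a b, vminus t ∂μ₂)
      = u b * v b - u a * v a := by
  have integral_u (ν : Measure α) [IsLocallyFiniteMeasure ν] :
      ∫ t in Ioc a b, u t ∂ν
        = (∫ t in Ioc a b, μ₁.real (Icc c t) ∂ν) - ∫ t in Ioc a b, μ₂.real (Icc c t) ∂ν := by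
    simp only [hu]
    exact integral_sub (integrableOn_measureReal_Icc μ₁ ν a b c)
      (integrableOn_measureReal_Icc μ₂ ν a b c)
  have integral_vminus (μ : Measure α) [IsLocallyFiniteMeasure μ] :
      ∫ t in Ioc a b, vminus t ∂μ
        = (∫ t in Ioc a b, ν₁.real (Ico c t) ∂μ) - ∫ t in Ioc a b, ν₂.real (Ico c t) ∂μ := by
    simp only [hvminus]
    exact integral_sub (integrableOn_measureReal_Ico ν₁ μ a b c)
      (integrableOn_measureReal_Ico ν₂ μ a b c)
  rw [integral_u, integral_u, integral_vminus, integral_vminus, hu, hu, hv, hv]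
  linear_combination
    setIntegral_measureReal_Icc_add_setIntegral_measureReal_Ico μ₁ ν₁ hca hab
    - setIntegral_measureReal_Icc_add_setIntegral_measureReal_Ico μ₁ ν₂ hca hab
    - setIntegral_measureReal_Icc_add_setIntegral_measureReal_Ico μ₂ ν₁ hca hab
    + setIntegral_measureReal_Icc_add_setIntegral_measureReal_Ico μ₂ ν₂ hca hab

end LocallyFinite

/-- Integration by parts for right-continuous BV functions `u(t) = μ([0,t])`,
`v(t) = ν([0,t])`, `v(t-) = ν([0,t))`, where the finite signed Borel measures
`μ = μ₁ - μ₂` and `ν = ν₁ - ν₂` are supported in `[0,T]`: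
`∫_{(a,b]} u dν + ∫_{(a,b]} v_- dμ = u(b)v(b) - u(a)v(a)`. -/
theorem stmt6 (T : ℝ) (hT : 0 < T)
    (μ₁ μ₂ ν₁ ν₂ : Measure ℝ)
    [IsFiniteMeasure μ₁] [IsFiniteMeasure μ₂] [IsFiniteMeasure ν₁] [IsFiniteMeasure ν₂]
    (hμ₁ : μ₁ (Icc 0 T)ᶜ = 0) (hμ₂ : μ₂ (Icc 0 T)ᶜ = 0)
    (hν₁ : ν₁ (Icc 0 T)ᶜ = 0) (hν₂ : ν₂ (Icc 0 T)ᶜ = 0)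
    (u v vminus : ℝ → ℝ)
    (hu : ∀ t, u t = (μ₁ (Icc 0 t)).toReal - (μ₂ (Icc 0 t)).toReal)
    (hv : ∀ t, v t = (ν₁ (Icc 0 t)).toReal - (ν₂ (Icc 0 t)).toReal)
    (hvminus : ∀ t, vminus t = (ν₁ (Ico 0 t)).toReal - (ν₂ (Ico 0 t)).toReal)
    (a b : ℝ) (ha : 0 ≤ a) (hab : a ≤ b) (hbT : b ≤ T) :
    ((∫ t in Ioc a b, u t ∂ν₁) - (∫ t in Ioc a b, u t ∂ν₂))
      + ((∫ t in Ioc a b, vminus t ∂μ₁) - (∫ t in Ioc a b, vminus t ∂μ₂))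
      = u b * v b - u a * v a :=
  stmt6_general μ₁ μ₂ ν₁ ν₂ hu hv hvminus ha hab
end

section
/- Let T > 0 and let μ and ν be finite signed Borel measures on the interval [0,T]. Define u, v : [0,T] → ℝ by u(t) = μ([0,t]) and v(t) = ν([0,t]). Then for all 0 ≤ a ≤ b ≤ T: u(b) v(b) − u(a) v(a) = ∫_{(a,b]} u(t) dν(t) + ∫_{(a,b]} v(t) dμ(t) − Σ_{s ∈ (a,b]} μ({s}) ν({s}), where the sum ranges over the (at most countably many) points s ∈ (a,b] at which both μ and ν have an atom, and converges absolutely. -/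
open MeasureTheory Set

open scoped ENNReal

/-!
The half-planes `{x ≤ y}` and `{y ≤ x}` cover the square and meet in its diagonal. Measuring them
with the product of two positive measures, Tonelli turns the half-planes into the two integrals,
while the diagonal carries only the products of common atoms. Applying this to the restrictions to
`(a, b]` gives the formula for the increments from `a`; the signed case follows by bilinearity.
-/

section Atoms

variable {α : Type*} [MeasurableSpace α]

theorem measureReal_restrict_singleton [MeasurableSingletonClass α] (μ : Measure α) (s : Set α)
    (x : α) : (μ.restrict s).real {x} = s.indicator (fun x => μ.real {x}) x := by
  rw [measureReal_restrict_apply (measurableSet_singleton x)]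
  by_cases hx : x ∈ s <;> simp [hx]

theorem measure_prod_diagonal [MeasurableEq α] (μ ν : Measure α) [SFinite μ] [SFinite ν] :
    μ.prod ν (diagonal α) = ∑' x, μ {x} * ν {x} := by
  have countable_atoms : {x | 0 < μ {x}}.Countable :=
    Measure.countable_meas_pos_of_disjoint_iUnion (fun _ => measurableSet_singleton _)
      fun _ _ hne => disjoint_singleton.2 hne
  have section_diagonal (y : α) : (fun x => (x, y)) ⁻¹' diagonal α = {y} := rfl
  calc μ.prod ν (diagonal α)
      = ∫⁻ y, μ {y} ∂ν := by
        simp only [Measure.prod_apply_symm measurableSet_diagonal, section_diagonal]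
    _ = ∫⁻ y in {x | 0 < μ {x}}, μ {y} ∂ν :=
        (setLIntegral_eq_of_support_subset fun _ hx => pos_iff_ne_zero.2 hx).symm
    _ = ∑' x : {x | 0 < μ {x}}, μ {(x : α)} * ν {(x : α)} :=
        lintegral_countable _ countable_atoms
    _ = ∑' x, μ {x} * ν {x} :=
        tsum_subtype_eq_of_support_subset (f := fun x => μ {x} * ν {x}) fun _ hx =>
          pos_iff_ne_zero.2 (left_ne_zero_of_mul hx)

end Atoms

section LinearOrder

variable {α : Type*} [LinearOrder α] [TopologicalSpace α] [OrderClosedTopology α]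
  [MeasurableSpace α] [OpensMeasurableSpace α]

theorem measureReal_Icc_sub_measureReal_Icc {μ : Measure α} {c a t : α}
    (hμ : μ (Icc c t) ≠ ∞) (hca : c ≤ a) (hat : a ≤ t) :
    μ.real (Icc c t) - μ.real (Icc c a) = μ.real (Ioc a t) := by
  have split : Icc c t \ Icc c a = Ioc a t := by grind
  rw [← split, measureReal_sdiff (Icc_subset_Icc_right hat) measurableSet_Icc hμ]

theorem sub_eq_measureReal_Ioc_sub {μ₁ μ₂ : Measure α} {u : α → ℝ} {c a t : α}
    (hμ₁ : μ₁ (Icc c t) ≠ ∞) (hμ₂ : μ₂ (Icc c t) ≠ ∞)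
    (hu : ∀ s, u s = μ₁.real (Icc c s) - μ₂.real (Icc c s)) (hca : c ≤ a) (hat : a ≤ t) :
    u t - u a = μ₁.real (Ioc a t) - μ₂.real (Ioc a t) := by
  rw [hu, hu, sub_sub_sub_comm, measureReal_Icc_sub_measureReal_Icc hμ₁ hca hat,
    measureReal_Icc_sub_measureReal_Icc hμ₂ hca hat]

theorem measureReal_restrict_Ioc_Iic (μ : Measure α) {a b t : α} (htb : t ≤ b) :
    (μ.restrict (Ioc a b)).real (Iic t) = μ.real (Ioc a t) := by
  rw [measureReal_restrict_apply measurableSet_Iic, inter_comm, Ioc_inter_Iic, min_eq_right htb]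

theorem setIntegral_measureReal_restrict_Iic (μ ν : Measure α) (a b : α) :
    ∫ t in Ioc a b, (μ.restrict (Ioc a b)).real (Iic t) ∂ν
      = ∫ t in Ioc a b, μ.real (Ioc a t) ∂ν :=
  setIntegral_congr_fun measurableSet_Ioc fun _ ht => measureReal_restrict_Ioc_Iic μ ht.2

variable [SecondCountableTopology α]

theorem measure_prod_setOf_snd_le_fst (μ ν : Measure α) [SFinite ν] :
    μ.prod ν {p | p.2 ≤ p.1} = ∫⁻ t, ν (Iic t) ∂μ :=
  Measure.prod_apply (measurableSet_le measurable_snd measurable_fst)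

theorem measure_prod_setOf_fst_le_snd (μ ν : Measure α) [SFinite μ] [SFinite ν] :
    μ.prod ν {p | p.1 ≤ p.2} = ∫⁻ t, μ (Iic t) ∂ν :=
  Measure.prod_apply_symm (measurableSet_le measurable_fst measurable_snd)

theorem lintegral_measure_Iic_add_lintegral_measure_Iic (μ ν : Measure α)
    [SFinite μ] [SFinite ν] :
    ∫⁻ t, μ (Iic t) ∂ν + ∫⁻ t, ν (Iic t) ∂μ = μ univ * ν univ + ∑' x, μ {x} * ν {x} := by
  have cover : {p : α × α | p.1 ≤ p.2} ∪ {p | p.2 ≤ p.1} = univ ×ˢ univ := by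
    rw [univ_prod_univ]
    exact eq_univ_of_forall fun p => le_total p.1 p.2
  have overlap : {p : α × α | p.1 ≤ p.2} ∩ {p | p.2 ≤ p.1} = diagonal α :=
    ext fun _ => le_antisymm_iff.symm
  rw [← measure_prod_setOf_fst_le_snd, ← measure_prod_setOf_snd_le_fst,
    ← measure_union_add_inter _ (measurableSet_le measurable_snd measurable_fst), cover, overlap,
    Measure.prod_prod, measure_prod_diagonal]

theorem measurable_measure_Iic (μ : Measure α) [SFinite μ] : Measurable fun t => μ (Iic t) :=
  measurable_measure_prodMk_right (measurableSet_le measurable_fst measurable_snd)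

theorem lintegral_measure_Iic_ne_top (μ ν : Measure α) [IsFiniteMeasure μ] [IsFiniteMeasure ν] :
    ∫⁻ t, μ (Iic t) ∂ν ≠ ∞ :=
  measure_prod_setOf_fst_le_snd μ ν ▸ measure_ne_top _ _

theorem integrable_measureReal_Iic (μ ν : Measure α) [IsFiniteMeasure μ] [IsFiniteMeasure ν] :
    Integrable (fun t => μ.real (Iic t)) ν :=
  integrable_toReal_of_lintegral_ne_top (measurable_measure_Iic μ).aemeasurable
    (lintegral_measure_Iic_ne_top μ ν)

theorem toReal_lintegral_measure_Iic (μ ν : Measure α) [IsFiniteMeasure μ] :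
    (∫⁻ t, μ (Iic t) ∂ν).toReal = ∫ t, μ.real (Iic t) ∂ν :=
  (integral_toReal (measurable_measure_Iic μ).aemeasurable
    (.of_forall fun _ => measure_lt_top _ _)).symm

theorem hasSum_measureReal_singleton_mul (μ ν : Measure α)
    [IsFiniteMeasure μ] [IsFiniteMeasure ν] :
    HasSum (fun x => μ.real {x} * ν.real {x})
      (∫ t, μ.real (Iic t) ∂ν + ∫ t, ν.real (Iic t) ∂μ - μ.real univ * ν.real univ) := by
  have diagonal_finite : ∑' x, μ {x} * ν {x} ≠ ∞ :=
    measure_prod_diagonal μ ν ▸ measure_ne_top _ _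
  have total : ∫ t, μ.real (Iic t) ∂ν + ∫ t, ν.real (Iic t) ∂μ
      = μ.real univ * ν.real univ + (∑' x, μ {x} * ν {x}).toReal := by
    rw [← toReal_lintegral_measure_Iic, ← toReal_lintegral_measure_Iic,
      ← ENNReal.toReal_add (lintegral_measure_Iic_ne_top μ ν) (lintegral_measure_Iic_ne_top ν μ),
      lintegral_measure_Iic_add_lintegral_measure_Iic,
      ENNReal.toReal_add (by finiteness) diagonal_finite, ENNReal.toReal_mul,
      measureReal_def, measureReal_def]
  rw [total, add_sub_cancel_left, ENNReal.tsum_toReal_eq fun _ => by finiteness]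
  simpa only [ENNReal.toReal_mul, measureReal_def] using ENNReal.hasSum_toReal diagonal_finite

theorem integrableOn_measureReal_Ioc {μ ν : Measure α} {a b : α}
    (hμ : μ (Ioc a b) ≠ ∞) (hν : ν (Ioc a b) ≠ ∞) :
    IntegrableOn (fun t => μ.real (Ioc a t)) (Ioc a b) ν := by
  have := isFiniteMeasure_restrict.2 hμ
  have := isFiniteMeasure_restrict.2 hν
  exact IntegrableOn.congr_fun (integrable_measureReal_Iic (μ.restrict (Ioc a b)) _)
    (fun _ ht => measureReal_restrict_Ioc_Iic μ ht.2) measurableSet_Ioc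

theorem hasSum_Ioc_measureReal_singleton_mul {μ ν : Measure α} {a b : α}
    (hμ : μ (Ioc a b) ≠ ∞) (hν : ν (Ioc a b) ≠ ∞) :
    HasSum (fun s : Ioc a b => μ.real {(s : α)} * ν.real {(s : α)})
      (∫ t in Ioc a b, μ.real (Ioc a t) ∂ν + ∫ t in Ioc a b, ν.real (Ioc a t) ∂μ
        - μ.real (Ioc a b) * ν.real (Ioc a b)) := by
  have := isFiniteMeasure_restrict.2 hμ
  have := isFiniteMeasure_restrict.2 hν
  have key := hasSum_measureReal_singleton_mul (μ.restrict (Ioc a b)) (ν.restrict (Ioc a b))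
  simp only [measureReal_restrict_singleton, ← indicator_mul, measureReal_restrict_apply_univ,
    setIntegral_measureReal_restrict_Iic] at key
  exact hasSum_subtype_iff_indicator.2 key

theorem setIntegral_Ioc_eq_of_sub_eq_measureReal {μ₁ μ₂ ν : Measure α} {a b : α} {u : α → ℝ}
    (hμ₁ : μ₁ (Ioc a b) ≠ ∞) (hμ₂ : μ₂ (Ioc a b) ≠ ∞) (hν : ν (Ioc a b) ≠ ∞)
    (hu : ∀ t ∈ Ioc a b, u t - u a = μ₁.real (Ioc a t) - μ₂.real (Ioc a t)) :
    ∫ t in Ioc a b, u t ∂ν = u a * ν.real (Ioc a b)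
      + (∫ t in Ioc a b, μ₁.real (Ioc a t) ∂ν - ∫ t in Ioc a b, μ₂.real (Ioc a t) ∂ν) := by
  have := isFiniteMeasure_restrict.2 hν
  have integrable₁ := integrableOn_measureReal_Ioc hμ₁ hν
  have integrable₂ := integrableOn_measureReal_Ioc hμ₂ hν
  calc ∫ t in Ioc a b, u t ∂ν
      = ∫ t in Ioc a b, (u a + (μ₁.real (Ioc a t) - μ₂.real (Ioc a t))) ∂ν :=
        setIntegral_congr_fun measurableSet_Ioc fun t ht => sub_eq_iff_eq_add'.1 (hu t ht)
    _ = (∫ _ in Ioc a b, u a ∂ν)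
          + ∫ t in Ioc a b, (μ₁.real (Ioc a t) - μ₂.real (Ioc a t)) ∂ν :=
        integral_add (integrable_const _) (integrable₁.sub integrable₂)
    _ = _ := by
        rw [integral_sub integrable₁ integrable₂, setIntegral_const, smul_eq_mul, mul_comm]

theorem stmt7_general {μ₁ μ₂ ν₁ ν₂ : Measure α} {u v : α → ℝ} {a b : α}
    (hμ₁ : μ₁ (Ioc a b) ≠ ∞) (hμ₂ : μ₂ (Ioc a b) ≠ ∞)
    (hν₁ : ν₁ (Ioc a b) ≠ ∞) (hν₂ : ν₂ (Ioc a b) ≠ ∞)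
    (hu : ∀ t ∈ Icc a b, u t - u a = μ₁.real (Ioc a t) - μ₂.real (Ioc a t))
    (hv : ∀ t ∈ Icc a b, v t - v a = ν₁.real (Ioc a t) - ν₂.real (Ioc a t))
    (hab : a ≤ b) :
    Summable (fun s : Ioc a b =>
      |(μ₁.real {(s : α)} - μ₂.real {(s : α)}) * (ν₁.real {(s : α)} - ν₂.real {(s : α)})|) ∧
    u b * v b - u a * v a
      = ((∫ t in Ioc a b, u t ∂ν₁) - ∫ t in Ioc a b, u t ∂ν₂)
        + ((∫ t in Ioc a b, v t ∂μ₁) - ∫ t in Ioc a b, v t ∂μ₂)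
        - ∑' s : Ioc a b,
            (μ₁.real {(s : α)} - μ₂.real {(s : α)}) * (ν₁.real {(s : α)} - ν₂.real {(s : α)}) := by
  have u_end := sub_eq_iff_eq_add'.1 (hu b (right_mem_Icc.2 hab))
  have v_end := sub_eq_iff_eq_add'.1 (hv b (right_mem_Icc.2 hab))
  replace hu := fun t ht => hu t (Ioc_subset_Icc_self ht)
  replace hv := fun t ht => hv t (Ioc_subset_Icc_self ht)
  have atoms :=
    ((hasSum_Ioc_measureReal_singleton_mul hμ₁ hν₁).sub
      (hasSum_Ioc_measureReal_singleton_mul hμ₁ hν₂)).sub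
    ((hasSum_Ioc_measureReal_singleton_mul hμ₂ hν₁).sub
      (hasSum_Ioc_measureReal_singleton_mul hμ₂ hν₂))
  simp only [← mul_sub, ← sub_mul] at atoms
  refine ⟨atoms.summable.abs, ?_⟩
  rw [atoms.tsum_eq, u_end, v_end,
    setIntegral_Ioc_eq_of_sub_eq_measureReal hμ₁ hμ₂ hν₁ hu,
    setIntegral_Ioc_eq_of_sub_eq_measureReal hμ₁ hμ₂ hν₂ hu,
    setIntegral_Ioc_eq_of_sub_eq_measureReal hν₁ hν₂ hμ₁ hv,
    setIntegral_Ioc_eq_of_sub_eq_measureReal hν₁ hν₂ hμ₂ hv]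
  ring

end LinearOrder

/-- Product rule with jump correction for right-continuous BV functions
`u(t) = μ([0,t])`, `v(t) = ν([0,t])`, where the finite signed Borel measures
`μ = μ₁ - μ₂` and `ν = ν₁ - ν₂` are supported in `[0,T]`:
`u(b)v(b) - u(a)v(a) = ∫_{(a,b]} u dν + ∫_{(a,b]} v dμ - Σ_{s ∈ (a,b]} μ({s}) ν({s})`,
and the sum of the atom products converges absolutely. -/
theorem stmt7 (T : ℝ) (hT : 0 < T)
    (μ₁ μ₂ ν₁ ν₂ : Measure ℝ)
    [IsFiniteMeasure μ₁] [IsFiniteMeasure μ₂] [IsFiniteMeasure ν₁] [IsFiniteMeasure ν₂]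
    (hμ₁ : μ₁ (Icc 0 T)ᶜ = 0) (hμ₂ : μ₂ (Icc 0 T)ᶜ = 0)
    (hν₁ : ν₁ (Icc 0 T)ᶜ = 0) (hν₂ : ν₂ (Icc 0 T)ᶜ = 0)
    (u v : ℝ → ℝ)
    (hu : ∀ t, u t = (μ₁ (Icc 0 t)).toReal - (μ₂ (Icc 0 t)).toReal)
    (hv : ∀ t, v t = (ν₁ (Icc 0 t)).toReal - (ν₂ (Icc 0 t)).toReal)
    (a b : ℝ) (ha : 0 ≤ a) (hab : a ≤ b) (hbT : b ≤ T) :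
    Summable (fun s : Ioc a b =>
      |((μ₁ {(s : ℝ)}).toReal - (μ₂ {(s : ℝ)}).toReal)
        * ((ν₁ {(s : ℝ)}).toReal - (ν₂ {(s : ℝ)}).toReal)|) ∧
    u b * v b - u a * v a
      = ((∫ t in Ioc a b, u t ∂ν₁) - (∫ t in Ioc a b, u t ∂ν₂))
        + ((∫ t in Ioc a b, v t ∂μ₁) - (∫ t in Ioc a b, v t ∂μ₂))
        - ∑' s : Ioc a b,
            ((μ₁ {(s : ℝ)}).toReal - (μ₂ {(s : ℝ)}).toReal)
              * ((ν₁ {(s : ℝ)}).toReal - (ν₂ {(s : ℝ)}).toReal) := by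
  exact stmt7_general (by finiteness) (by finiteness) (by finiteness) (by finiteness)
    (fun _ ht => sub_eq_measureReal_Ioc_sub (by finiteness) (by finiteness) hu ha ht.1)
    (fun _ ht => sub_eq_measureReal_Ioc_sub (by finiteness) (by finiteness) hv ha ht.1) hab
end

section
/- Let E be a real normed space, T > 0, and let f : [0,T] → E be a càdlàg function, i.e. f is right-continuous at every t ∈ [0,T) and has a left-hand limit at every t ∈ (0,T]. Then for every ε > 0 there exist a partition 0 = a_0 < a_1 < ⋯ < a_p = T and a function g : [0,T] → E that is constant on each interval [a_{i−1}, a_i) for i = 1, …, p, such that every value of g is a value of f (g([0,T]) ⊆ f([0,T])), sup_{t ∈ [0,T]} ‖f(t) − g(t)‖ < ε, and the total variation of g on [0,T] is at most the total variation of f on [0,T] (as extended nonnegative reals). -/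
open Set Filter

/-! Continuous induction on `t` shows that `[x, t)` can be cut into finitely many pieces `[s, u)`
on which `f` stays close to `f s`: left limits carry the claim to a supremum of such `t`, and right
continuity carries it past `t`. Cut `[x, y)` in this way, and let `φ` send each point to the left
end of its piece and fix `y`. Then `f ∘ φ` is a step function close to `f` on `[x, y]`, and its
variation is at most that of `f` because `φ` is monotone. -/

open scoped Topology Uniformity

theorem exists_seq_of_reflTransGen {α : Type*} {r : α → α → Prop} {x y : α}
    (h : Relation.ReflTransGen r x y) :
    ∃ (p : ℕ) (a : ℕ → α), a 0 = x ∧ a p = y ∧ ∀ i < p, r (a i) (a (i + 1)) := by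
  induction h using Relation.ReflTransGen.head_induction_on with
  | refl => exact ⟨0, fun _ => y, rfl, rfl, by simp⟩
  | @head x z hxz _ ih =>
    obtain ⟨p, a, rfl, hlast, ha⟩ := ih
    refine ⟨p + 1, fun | 0 => x | n + 1 => a n, rfl, hlast, ?_⟩
    rintro (_ | i) hi
    · exact hxz
    · exact ha i (Nat.lt_of_succ_lt_succ hi)

section PartitionFloor

variable {α : Type*} [LinearOrder α] {a : ℕ → α} {p : ℕ} {s : α}

/-- The largest of the partition points `a 0, …, a p` that is at most `s`, for `a` monotone on
`{0, …, p}`; for `s < a 0` the value is `a 0`. -/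
def partitionFloor (a : ℕ → α) (p : ℕ) (s : α) : α :=
  a (Nat.findGreatest (a · ≤ s) p)

theorem monotone_partitionFloor (ha : MonotoneOn a (Iic p)) : Monotone (partitionFloor a p) :=
  fun _ _ hst => ha (Nat.findGreatest_le p) (Nat.findGreatest_le p) <|
    Nat.findGreatest_mono_left (fun _ h => h.trans hst) p

theorem partitionFloor_le (hs : a 0 ≤ s) : partitionFloor a p s ≤ s :=
  Nat.findGreatest_spec (P := (a · ≤ s)) (Nat.zero_le p) hs

theorem le_partitionFloor (ha : MonotoneOn a (Iic p)) : a 0 ≤ partitionFloor a p s :=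
  ha (Nat.zero_le p) (Nat.findGreatest_le p) (Nat.zero_le _)

theorem partitionFloor_eq_of_mem_Ico (ha : MonotoneOn a (Iic p)) {i : ℕ} (hi : i < p)
    (hs : s ∈ Ico (a i) (a (i + 1))) : partitionFloor a p s = a i :=
  congrArg a <| Nat.findGreatest_eq_iff.2 ⟨hi.le, fun _ => hs.1, fun _ hin hnp =>
    (hs.2.trans_le (ha (mem_Iic.2 hi) hnp hin)).not_ge⟩

theorem partitionFloor_last : partitionFloor a p (a p) = a p :=
  congrArg a (Nat.findGreatest_eq le_rfl)

theorem mapsTo_partitionFloor (ha : MonotoneOn a (Iic p)) :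
    MapsTo (partitionFloor a p) (Icc (a 0) (a p)) (Icc (a 0) (a p)) :=
  fun _ hs => ⟨le_partitionFloor ha, (partitionFloor_le hs.1).trans hs.2⟩

end PartitionFloor

/-- On the nonempty interval `[s, t)` the function `f` stays `V`-close to its value at `s`. -/
structure StaysNear {α β : Type*} [Preorder α] (f : α → β) (V : Set (β × β)) (s t : α) :
    Prop where
  lt : s < t
  mem : ∀ r ∈ Ico s t, (f r, f s) ∈ V

section

variable {α β : Type*} {f : α → β} {V : Set (β × β)} {a : ℕ → α} {p : ℕ}

theorem monotoneOn_of_staysNear [Preorder α] (h : ∀ i < p, StaysNear f V (a i) (a (i + 1))) :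
    MonotoneOn a (Iic p) :=
  (strictMonoOn_Iic_of_lt_succ fun i hi => (h i hi).lt).monotoneOn

theorem prodMk_partitionFloor_mem [LinearOrder α] (hV : ∀ b, (b, b) ∈ V)
    (h : ∀ i < p, StaysNear f V (a i) (a (i + 1))) {s : α} (hs : s ∈ Icc (a 0) (a p)) :
    (f s, f (partitionFloor a p s)) ∈ V := by
  have ha := monotoneOn_of_staysNear h
  rcases hs.2.eq_or_lt with rfl | hsp
  · rw [partitionFloor_last]
    exact hV _
  · obtain ⟨i, hi, hsi⟩ : ∃ i < p, s ∈ Ico (a i) (a (i + 1)) := by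
      simpa only [mem_iUnion, Finset.mem_range, exists_prop] using
        Ico_subset_biUnion_Ico p a ⟨hs.1, hsp⟩
    rw [partitionFloor_eq_of_mem_Ico ha hi hsi]
    exact (h i hi).mem s hsi

end

section

variable {α : Type*} [ConditionallyCompleteLinearOrder α] [TopologicalSpace α] [OrderTopology α]

theorem mem_of_frequently_lt_of_exists_gt {s : Set α} {x y : α} (hx : x ∈ s) (hxy : x ≤ y)
    (hleft : ∀ t ∈ Ioc x y, (∃ᶠ r in 𝓝[<] t, r ∈ s) → t ∈ s)
    (hright : ∀ t ∈ s ∩ Ico x y, (s ∩ Ioc t y).Nonempty) : y ∈ s := by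
  have hne : (s ∩ Icc x y).Nonempty := ⟨x, hx, le_rfl, hxy⟩
  obtain ⟨c, hc⟩ : ∃ c, IsLUB (s ∩ Icc x y) c :=
    ⟨_, isLUB_csSup hne ⟨y, fun _ ht => ht.2.2⟩⟩
  have hxc : x ≤ c := hc.1 ⟨hx, le_rfl, hxy⟩
  have hcy : c ≤ y := hc.2 fun _ ht => ht.2.2
  have hcs : c ∈ s := by
    rcases hxc.eq_or_lt with rfl | hxc
    · exact hx
    have hfreq : ∃ᶠ r in 𝓝[≤] c, r ∈ s := (hc.frequently_mem hne).mono fun _ h => h.1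
    rw [← Iio_insert, nhdsWithin_insert, frequently_sup, frequently_pure] at hfreq
    exact hfreq.elim id (hleft c ⟨hxc, hcy⟩)
  by_contra hys
  have hcy : c < y := hcy.lt_of_ne fun h => hys (h ▸ hcs)
  obtain ⟨u, hus, hcu, huy⟩ := hright c ⟨hcs, hxc, hcy⟩
  exact hcu.not_ge (hc.1 ⟨hus, hxc.trans hcu.le, huy⟩)

end

section

variable {α β : Type*} [LinearOrder α] [TopologicalSpace α] [OrderTopology α] [UniformSpace β]
  {f : α → β} {V : Set (β × β)} {t : α}

theorem eventually_staysNear_of_cauchy (hV : V ∈ 𝓤 β) (hf : Cauchy (map f (𝓝[<] t))) :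
    ∀ᶠ s in 𝓝[<] t, StaysNear f V s t := by
  obtain ⟨x, hx⟩ : (Iio t).Nonempty := hf.1.of_map.nonempty_of_mem self_mem_nhdsWithin
  obtain ⟨A, hA, hAV⟩ := (cauchy_iff.1 hf).2 V hV
  obtain ⟨l, hl, hlA⟩ := (mem_nhdsLT_iff_exists_Ioo_subset' hx).1 hA
  filter_upwards [Ioo_mem_nhdsLT hl] with s hs
  exact ⟨hs.2, fun r hr => hAV ⟨hlA ⟨hs.1.trans_le hr.1, hr.2⟩, hlA hs⟩⟩

theorem exists_staysNear_of_continuousWithinAt (hV : V ∈ 𝓤 β) {y : α} (hty : t < y)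
    (hf : ContinuousWithinAt f (Icc t y) t) : ∃ u ∈ Ioc t y, StaysNear f V t u := by
  have hnear : ∀ᶠ r in 𝓝[≥] t, (f r, f t) ∈ V :=
    ((continuousWithinAt_Icc_iff_Ici hty).1 hf).eventually (mem_nhds_right _ hV)
  obtain ⟨u, hu, huV⟩ := (mem_nhdsGE_iff_exists_mem_Ioc_Ico_subset hty).1 hnear
  exact ⟨u, hu, hu.1, huV⟩

end

section

variable {α β : Type*} [ConditionallyCompleteLinearOrder α] [TopologicalSpace α] [OrderTopology α]
  {f : α → β} {V : Set (β × β)} {x y : α}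

theorem reflTransGen_staysNear [UniformSpace β] (hxy : x ≤ y)
    (hright : ∀ t ∈ Ico x y, ContinuousWithinAt f (Icc t y) t)
    (hleft : ∀ t ∈ Ioc x y, Cauchy (map f (𝓝[<] t))) (hV : V ∈ 𝓤 β) :
    Relation.ReflTransGen (StaysNear f V) x y := by
  refine mem_of_frequently_lt_of_exists_gt (s := {t | Relation.ReflTransGen (StaysNear f V) x t})
    .refl hxy (fun t ht hfreq => ?_) fun t ⟨hxt, ht⟩ => ?_
  · obtain ⟨s, hxs, hst⟩ :=
      (hfreq.and_eventually (eventually_staysNear_of_cauchy hV (hleft t ht))).exists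
    exact hxs.tail hst
  · obtain ⟨u, hu, htu⟩ := exists_staysNear_of_continuousWithinAt hV ht.2 (hright t ht)
    exact ⟨u, hxt.tail htu, hu⟩

theorem stmt14_general [PseudoEMetricSpace β] (hxy : x < y)
    (hright : ∀ t ∈ Ico x y, ContinuousWithinAt f (Icc t y) t)
    (hleft : ∀ t ∈ Ioc x y, Cauchy (map f (𝓝[<] t))) (hV : V ∈ 𝓤 β) :
    ∃ (p : ℕ) (a : ℕ → α) (g : α → β),
      0 < p ∧ a 0 = x ∧ a p = y ∧ (∀ i < p, a i < a (i + 1)) ∧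
      (∀ i < p, ∀ s ∈ Ico (a i) (a (i + 1)), g s = g (a i)) ∧
      (∀ s ∈ Icc x y, g s ∈ f '' Icc x y) ∧
      (∀ s ∈ Icc x y, (f s, g s) ∈ V) ∧
      eVariationOn g (Icc x y) ≤ eVariationOn f (Icc x y) := by
  obtain ⟨p, a, rfl, rfl, hnear⟩ :=
    exists_seq_of_reflTransGen (reflTransGen_staysNear hxy.le hright hleft hV)
  have hp : 0 < p := Nat.pos_of_ne_zero fun hp => hxy.ne (congrArg a hp.symm)
  have ha : MonotoneOn a (Iic p) := monotoneOn_of_staysNear hnear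
  have hmaps := mapsTo_partitionFloor ha
  refine ⟨p, a, f ∘ partitionFloor a p, hp, rfl, rfl, fun i hi => (hnear i hi).lt,
    fun i hi s hs => congrArg f ?_, fun s hs => mem_image_of_mem f (hmaps hs),
    fun s hs => prodMk_partitionFloor_mem (fun _ => refl_mem_uniformity hV) hnear hs,
    eVariationOn.comp_le_of_monotoneOn f _ ((monotone_partitionFloor ha).monotoneOn _) hmaps⟩
  rw [partitionFloor_eq_of_mem_Ico ha hi hs,
    partitionFloor_eq_of_mem_Ico ha hi (left_mem_Ico.2 (hnear i hi).lt)]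

end

/-- A càdlàg function on `[0,T]` can be uniformly approximated within `ε` by a
step function whose values are values of `f` and whose total variation does not
exceed that of `f`. -/
theorem stmt14 {E : Type*} [NormedAddCommGroup E] [NormedSpace ℝ E]
    (T : ℝ) (hT : 0 < T) (f : ℝ → E)
    (hright : ∀ t ∈ Ico (0 : ℝ) T, ContinuousWithinAt f (Icc t T) t)
    (hleft : ∀ t ∈ Ioc (0 : ℝ) T, ∃ L : E,
      Tendsto f (nhdsWithin t (Ico (0 : ℝ) t)) (nhds L))
    (ε : ℝ) (hε : 0 < ε) :
    ∃ (p : ℕ) (a : ℕ → ℝ) (g : ℝ → E),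
      0 < p ∧ a 0 = 0 ∧ a p = T ∧ (∀ i < p, a i < a (i + 1)) ∧
      (∀ i < p, ∀ s ∈ Ico (a i) (a (i + 1)), g s = g (a i)) ∧
      (∀ s ∈ Icc (0 : ℝ) T, g s ∈ f '' Icc (0 : ℝ) T) ∧
      (∀ s ∈ Icc (0 : ℝ) T, ‖f s - g s‖ < ε) ∧
      eVariationOn g (Icc 0 T) ≤ eVariationOn f (Icc 0 T) := by
  have hcauchy : ∀ t ∈ Ioc 0 T, Cauchy (map f (𝓝[<] t)) := fun t ht =>
    let ⟨_, hL⟩ := hleft t ht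
    (nhdsWithin_Ico_eq_nhdsLT ht.1 ▸ hL).cauchy_map
  simpa only [mem_ofPred_eq, dist_eq_norm] using
    stmt14_general hT hright hcauchy (Metric.dist_mem_uniformity hε)
end

section
/- Let E be a real inner product space, let a, b ∈ E be unit vectors, and let z ∈ E satisfy ⟨z, b⟩ = 0. Then ‖π_a z‖ ≥ (1 − ‖a − b‖²) ‖z‖. -/
open scoped RealInnerProductSpace

/-!
Pairing `π_a z` with `z` gives `‖z‖² - ⟪z, a⟫²`, so by Cauchy–Schwarz it is enough to bound
`⟪z, a⟫`; as `z ⊥ b`, this equals `⟪z, a - b⟫`, of absolute value at most `‖z‖ ‖a - b‖`.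
-/

section SeminormedSpace

variable {𝕜 E : Type*} [RCLike 𝕜] [SeminormedAddCommGroup E] [InnerProductSpace 𝕜 E]

theorem norm_inner_le_norm_mul_norm_sub_of_inner_eq_zero {z b : E} (hz : inner 𝕜 z b = 0)
    (a : E) : ‖inner 𝕜 z a‖ ≤ ‖z‖ * ‖a - b‖ := by
  have inner_sub : inner 𝕜 z (a - b) = inner 𝕜 z a := by rw [inner_sub_right, hz, sub_zero]
  exact inner_sub ▸ norm_inner_le_norm z (a - b)

theorem mul_norm_le_norm_of_mul_norm_sq_le_re_inner {w z : E} {c : ℝ}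
    (h : c * ‖z‖ ^ 2 ≤ RCLike.re (inner 𝕜 w z)) : c * ‖z‖ ≤ ‖w‖ := by
  rcases (norm_nonneg z).eq_or_lt with hz | hz
  · simp [← hz]
  · refine le_of_mul_le_mul_right ?_ hz
    calc c * ‖z‖ * ‖z‖ = c * ‖z‖ ^ 2 := by ring
      _ ≤ RCLike.re (inner 𝕜 w z) := h
      _ ≤ ‖w‖ * ‖z‖ := re_inner_le_norm w z

end SeminormedSpace

section OrthProj

variable {E : Type*} [NormedAddCommGroup E] [InnerProductSpace ℝ E]

theorem orthProj_apply (u z : E) : orthProj u z = z - ⟪u, z⟫ • u := rfl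

theorem inner_orthProj_self (u z : E) : ⟪orthProj u z, z⟫ = ‖z‖ ^ 2 - ⟪z, u⟫ ^ 2 := by
  rw [orthProj_apply, inner_sub_left, real_inner_smul_left, real_inner_self_eq_norm_sq,
    real_inner_comm z u, sq ⟪z, u⟫]

theorem stmt15_general (a : E) {b z : E} (hz : ⟪z, b⟫ = 0) :
    (1 - ‖a - b‖ ^ 2) * ‖z‖ ≤ ‖orthProj a z‖ := by
  have inner_sq_le : ⟪z, a⟫ ^ 2 ≤ (‖z‖ * ‖a - b‖) ^ 2 :=
    sq_le_sq.2 <| (norm_inner_le_norm_mul_norm_sub_of_inner_eq_zero hz a).trans (le_abs_self _)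
  refine mul_norm_le_norm_of_mul_norm_sq_le_re_inner (𝕜 := ℝ) ?_
  calc (1 - ‖a - b‖ ^ 2) * ‖z‖ ^ 2 = ‖z‖ ^ 2 - (‖z‖ * ‖a - b‖) ^ 2 := by ring
    _ ≤ ‖z‖ ^ 2 - ⟪z, a⟫ ^ 2 := sub_le_sub_left inner_sq_le _
    _ = ⟪orthProj a z, z⟫ := (inner_orthProj_self a z).symm

end OrthProj

theorem stmt15 {E : Type*} [NormedAddCommGroup E] [InnerProductSpace ℝ E]
    (a b : E) (ha : ‖a‖ = 1) (hb : ‖b‖ = 1) (z : E) (hz : ⟪z, b⟫ = 0) :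
    (1 - ‖a - b‖ ^ 2) * ‖z‖ ≤ ‖orthProj a z‖ :=
  stmt15_general a hz
end

section
/- There exists a constant c₁ > 0 such that for every integer j ≥ 2 and every z ∈ ℝ² with ⟨z, n(1/j)⟩ = 0 (i.e. z tangent to the parabola at the point (1/j, 1/j²)), one has ‖π_{n(−1/j)} z‖ ≤ (1 − c₁ j^{−2}) ‖z‖. -/
open scoped RealInnerProductSpace

/-- The unit normal `n(a) = (−2a, 1)/√(1 + 4a²)` to the parabola `x₂ = x₁²`
at the point `(a, a²)`. -/
noncomputable def parabolaNormal (a : ℝ) : EuclideanSpace ℝ (Fin 2) :=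
  (Real.sqrt (1 + 4 * a ^ 2))⁻¹ • (WithLp.equiv 2 (Fin 2 → ℝ)).symm ![-2 * a, 1]

/-!
In a plane, projecting a line along a unit vector `v` scales lengths by the cosine `|⟪u, v⟫|` of
the angle between `v` and the unit normal `u` of the line. For normals of the parabola at abscissae
`a` and `b` the squared sine of that angle is `4 (a - b)² / ((1 + 4a²)(1 + 4b²))`, and
`|cos θ| ≤ 1 - sin² θ / 2`. The bound is therefore quadratic in `a - b`, uniformly for `a`, `b` in
a bounded interval.
-/

section OrthProj

variable {E : Type*} [NormedAddCommGroup E] [InnerProductSpace ℝ E]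

theorem norm_orthProj_sq {v : E} (hv : ‖v‖ = 1) (z : E) :
    ‖orthProj v z‖ ^ 2 = ‖z‖ ^ 2 - ⟪z, v⟫ ^ 2 := by
  have horth : orthProj v z = z - ⟪z, v⟫ • v := by simp [orthProj, real_inner_comm]
  rw [horth, norm_sub_sq_real, inner_smul_right, norm_smul, hv, mul_one, Real.norm_eq_abs, sq_abs]
  ring

theorem inner_sq_add_inner_sq_mul_norm_sq [Fact (Module.finrank ℝ E = 2)] {u v z : E}
    (hu : ‖u‖ = 1) (hv : ‖v‖ = 1) (hz : ⟪z, u⟫ = 0) :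
    ⟪z, v⟫ ^ 2 + ⟪u, v⟫ ^ 2 * ‖z‖ ^ 2 = ‖z‖ ^ 2 := by
  have : FiniteDimensional ℝ E := .of_fact_finrank_eq_two
  let o : Orientation ℝ E (Fin 2) :=
    (Module.finBasisOfFinrankEq ℝ E (Fact.out : Module.finrank ℝ E = 2)).orientation
  have huz : ⟪u, z⟫ = 0 := by rw [real_inner_comm, hz]
  have hzz : o.areaForm u z ^ 2 = ‖z‖ ^ 2 := by
    simpa [huz, hu] using o.inner_sq_add_areaForm_sq u z
  have hvv : ⟪u, v⟫ ^ 2 + o.areaForm u v ^ 2 = 1 := by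
    simpa [hu, hv] using o.inner_sq_add_areaForm_sq u v
  have hzv : o.areaForm u z * o.areaForm u v = ⟪z, v⟫ := by
    simpa [huz, hu] using o.inner_mul_inner_add_areaForm_mul_areaForm u z v
  rw [← hzv, mul_pow, hzz]
  linear_combination ‖z‖ ^ 2 * hvv

theorem norm_orthProj_eq_abs_inner_mul_norm [Fact (Module.finrank ℝ E = 2)] {u v z : E}
    (hu : ‖u‖ = 1) (hv : ‖v‖ = 1) (hz : ⟪z, u⟫ = 0) :
    ‖orthProj v z‖ = |⟪u, v⟫| * ‖z‖ := by
  rw [← sq_eq_sq₀ (norm_nonneg _) (by positivity), norm_orthProj_sq hv, mul_pow, sq_abs]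
  linarith [inner_sq_add_inner_sq_mul_norm_sq hu hv hz]

end OrthProj

theorem inner_parabolaNormal_parabolaNormal (a b : ℝ) :
    ⟪parabolaNormal a, parabolaNormal b⟫ =
      (1 + 4 * a * b) / (√(1 + 4 * a ^ 2) * √(1 + 4 * b ^ 2)) := by
  simp only [parabolaNormal, PiLp.inner_apply, Fin.sum_univ_two, PiLp.smul_apply, smul_eq_mul,
    WithLp.equiv_symm_apply, Matrix.cons_val_zero, Matrix.cons_val_one, RCLike.inner_apply,
    conj_trivial]
  field_simp
  ring

theorem norm_parabolaNormal (a : ℝ) : ‖parabolaNormal a‖ = 1 := by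
  have hpos : 0 < 1 + 4 * a ^ 2 := by positivity
  rw [← sq_eq_sq₀ (norm_nonneg _) zero_le_one, ← real_inner_self_eq_norm_sq,
    inner_parabolaNormal_parabolaNormal, Real.mul_self_sqrt hpos.le, one_pow,
    div_eq_one_iff_eq hpos.ne']
  ring

theorem one_sub_inner_parabolaNormal_sq (a b : ℝ) :
    1 - ⟪parabolaNormal a, parabolaNormal b⟫ ^ 2 =
      4 * (a - b) ^ 2 / ((1 + 4 * a ^ 2) * (1 + 4 * b ^ 2)) := by
  have ha : 0 < 1 + 4 * a ^ 2 := by positivity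
  have hb : 0 < 1 + 4 * b ^ 2 := by positivity
  rw [inner_parabolaNormal_parabolaNormal, div_pow, mul_pow, Real.sq_sqrt ha.le,
    Real.sq_sqrt hb.le]
  field_simp
  ring

theorem abs_inner_parabolaNormal_le (a b : ℝ) :
    |⟪parabolaNormal a, parabolaNormal b⟫| ≤
      1 - 2 * (a - b) ^ 2 / ((1 + 4 * a ^ 2) * (1 + 4 * b ^ 2)) := by
  set t := ⟪parabolaNormal a, parabolaNormal b⟫ with ht
  calc |t| ≤ 1 - (1 - t ^ 2) / 2 := by linarith [two_mul_le_add_sq |t| 1, sq_abs t]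
    _ = 1 - 2 * (a - b) ^ 2 / ((1 + 4 * a ^ 2) * (1 + 4 * b ^ 2)) := by
      rw [ht, one_sub_inner_parabolaNormal_sq]
      ring

theorem stmt16_general {R a b : ℝ} (ha : |a| ≤ R) (hb : |b| ≤ R)
    {z : EuclideanSpace ℝ (Fin 2)} (hz : ⟪z, parabolaNormal a⟫ = 0) :
    ‖orthProj (parabolaNormal b) z‖ ≤
      (1 - 2 * (a - b) ^ 2 / (1 + 4 * R ^ 2) ^ 2) * ‖z‖ := by
  have : Fact (Module.finrank ℝ (EuclideanSpace ℝ (Fin 2)) = 2) := ⟨finrank_euclideanSpace_fin⟩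
  have ha' : a ^ 2 ≤ R ^ 2 := sq_le_sq.mpr (ha.trans (le_abs_self R))
  have hb' : b ^ 2 ≤ R ^ 2 := sq_le_sq.mpr (hb.trans (le_abs_self R))
  rw [norm_orthProj_eq_abs_inner_mul_norm (norm_parabolaNormal a) (norm_parabolaNormal b) hz]
  gcongr
  calc |⟪parabolaNormal a, parabolaNormal b⟫|
      ≤ 1 - 2 * (a - b) ^ 2 / ((1 + 4 * a ^ 2) * (1 + 4 * b ^ 2)) :=
        abs_inner_parabolaNormal_le a b
    _ ≤ 1 - 2 * (a - b) ^ 2 / (1 + 4 * R ^ 2) ^ 2 := by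
        rw [sq (1 + 4 * R ^ 2)]
        gcongr

theorem stmt16 :
    ∃ c₁ : ℝ, 0 < c₁ ∧ ∀ j : ℕ, 2 ≤ j →
      ∀ z : EuclideanSpace ℝ (Fin 2), ⟪z, parabolaNormal (1 / j)⟫ = 0 →
        ‖orthProj (parabolaNormal (-(1 / j))) z‖ ≤ (1 - c₁ / (j : ℝ) ^ 2) * ‖z‖ := by
  refine ⟨2, two_pos, fun j hj z hz => ?_⟩
  have hle : |1 / (j : ℝ)| ≤ 1 / 2 := by
    simpa using inv_anti₀ two_pos (Nat.ofNat_le_cast (α := ℝ).mpr hj)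
  convert stmt16_general hle ((abs_neg _).trans_le hle) hz using 2
  ring
end
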